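/- Let d ≥ 3, 0 < r < 1, and 1 ≤ m ≤ d−1. There exists a constant C < ∞, depending only on d, m and r, such that for every C¹ function f : ℝ^{d−m} × ℝ^m → ℝ with compact support contained in B_{d−m} × B_m, every a ∈ ℝ, and every b ∈ ℝ∖{0}: |∫_{B_{d−m}} ∫_{B_m} f(x,y)/(a + ib − |x|² + |y|²) d^{d−m}x d^m y| ≤ C·‖f‖_{C¹}·(1 + a² + b²). -/

import Mathlib

open MeasureTheory Complex Real
open scoped ENNReal

noncomputable section

namespace LatSch

/-- The lattice `Γ = ℤ^d`. -/
abbrev Γd (d : ℕ) := Fin d → ℤ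

/-- The Hilbert space `ℓ²(Γ)`. -/
abbrev L2 (d : ℕ) := lp (fun _ : Γd d => ℂ) 2

/-- Euclidean norm of a lattice point. -/
def lnorm {d : ℕ} (x : Γd d) : ℝ := Real.sqrt (∑ i, ((x i : ℝ)) ^ 2)

/-- The standard basis vector `δ_x` of `ℓ²(Γ)`. -/
def delta {d : ℕ} (x : Γd d) : L2 d := lp.single 2 x 1

local notation "⟪" a ", " b "⟫" => @inner ℂ _ _ a b

/-- The cube `[-π, π]^d`, a fundamental domain of the torus. -/
def torusBox (d : ℕ) : Set (Fin d → ℝ) := Set.univ.pi fun _ => Set.Icc (-π) π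

/-- `⟨p, m⟩` for `p ∈ ℝ^d`, `m ∈ ℤ^d`. -/
def dotZ {d : ℕ} (p : Fin d → ℝ) (m : Γd d) : ℝ := ∑ i, p i * (m i : ℝ)

/-- Fourier coefficient `f̂(m) = (2π)^{-d} ∫_{[-π,π]^d} f(p) e^{i⟨p,m⟩} dp`. -/
def fCoeff {d : ℕ} (f : (Fin d → ℝ) → ℝ) (m : Γd d) : ℂ :=
  ((1 / (2 * π) ^ d : ℝ) : ℂ) *
    ∫ p in torusBox d, (f p : ℂ) * Complex.exp (Complex.I * (dotZ p m : ℝ))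

/-- `H` is the Fourier multiplier (hopping matrix) `h(f)`, characterized by its
matrix elements `⟨δ_x, H δ_y⟩ = f̂(x - y)`. -/
def IsMultiplier {d : ℕ} (f : (Fin d → ℝ) → ℝ) (H : L2 d →L[ℂ] L2 d) : Prop :=
  ∀ x y : Γd d, ⟪delta x, H (delta y)⟫ = fCoeff f (x - y)

/-- `M` is the operator of multiplication by the potential `V`. -/
def IsMulOp {d : ℕ} (V : Γd d → ℝ) (M : L2 d →L[ℂ] L2 d) : Prop :=
  ∀ (ψ : L2 d) (x : Γd d), (M ψ : ∀ _ : Γd d, ℂ) x = (V x : ℂ) * (ψ : ∀ _ : Γd d, ℂ) x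

/-- Partial derivative `∂_{p_k} f (p)`. -/
def pd {d : ℕ} (f : (Fin d → ℝ) → ℝ) (k : Fin d) (p : Fin d → ℝ) : ℝ :=
  fderiv ℝ f p (Pi.single k 1)

/-- `|∇f|²(p) = Σ_k (∂_{p_k} f(p))²`. -/
def gradSq {d : ℕ} (f : (Fin d → ℝ) → ℝ) (p : Fin d → ℝ) : ℝ := ∑ k, pd f k p ^ 2

/-- The Hessian matrix of `f` at `p`. -/
def hess {d : ℕ} (f : (Fin d → ℝ) → ℝ) (p : Fin d → ℝ) : Matrix (Fin d) (Fin d) ℝ :=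
  Matrix.of fun i j => fderiv ℝ (fun q => fderiv ℝ f q (Pi.single j 1)) p (Pi.single i 1)

/-- All critical points of `f` are nondegenerate (`f` is a Morse function). -/
def IsMorse {d : ℕ} (f : (Fin d → ℝ) → ℝ) : Prop :=
  ∀ p, fderiv ℝ f p = 0 → (hess f p).det ≠ 0

/-- `2πℤ^d`-periodicity. -/
def Periodic2pi {d : ℕ} (f : (Fin d → ℝ) → ℝ) : Prop :=
  ∀ (p : Fin d → ℝ) (m : Γd d), f (p + fun i => 2 * π * (m i : ℝ)) = f p

/-- A dispersion relation: a `2πℤ^d`-periodic function with minimum `0`. -/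
def IsDispersion {d : ℕ} (f : (Fin d → ℝ) → ℝ) : Prop :=
  Periodic2pi f ∧ (∀ p, 0 ≤ f p) ∧ (∃ p, f p = 0)

/-- Condition (M): `𝔢` and `|∇𝔢|²` are Morse functions. -/
def CondM {d : ℕ} (f : (Fin d → ℝ) → ℝ) : Prop := IsMorse f ∧ IsMorse (gradSq f)

/-- `Φ_{m,n}(V) = (Σ_x |V(x)|^{1/m} (1+|x|)^n)^m`, valued in `[0,∞]`. -/
def Phi {d : ℕ} (m n : ℕ) (V : Γd d → ℝ) : ℝ≥0∞ :=
  (∑' x : Γd d, ENNReal.ofReal (|V x| ^ ((1 : ℝ) / m) * (1 + lnorm x) ^ n)) ^ m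

/-- The set of eigenvectors of `H` (with real eigenvalue). -/
def eigvecs {d : ℕ} (H : L2 d →L[ℂ] L2 d) : Set (L2 d) :=
  {ψ : L2 d | ψ ≠ 0 ∧ ∃ μ : ℝ, H ψ = (μ : ℂ) • ψ}

/-- `N_pp[H]`: the Hilbert-space dimension of the closed linear span of all
eigenvectors of `H`. -/
def Npp {d : ℕ} (H : L2 d →L[ℂ] L2 d) : Cardinal :=
  Module.rank ℂ ((Submodule.span ℂ (eigvecs H)).topologicalClosure)

/-- The Fourier transform `ĝ_x(p) = (i/2·|∇𝔢(p)|² + ⟨∇𝔢(p), x⟩) e^{-i⟨p,x⟩}`. -/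
def ghat {d : ℕ} (e : (Fin d → ℝ) → ℝ) (x : Γd d) (p : Fin d → ℝ) : ℂ :=
  ((Complex.I / 2) * ((gradSq e p : ℝ) : ℂ) + ((∑ k, pd e k p * (x k : ℝ) : ℝ) : ℂ)) *
    Complex.exp (-(Complex.I * (dotZ p x : ℝ)))

/-- `g : Γ → ℓ²(Γ)` is the family of vectors `g_x` with Fourier transform `ĝ_x`. -/
def IsGVec {d : ℕ} (e : (Fin d → ℝ) → ℝ) (g : Γd d → L2 d) : Prop :=
  ∀ x m : Γd d,
    (g x : ∀ _ : Γd d, ℂ) m =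
      ((1 / (2 * π) ^ d : ℝ) : ℂ) *
        ∫ p in torusBox d, ghat e x p * Complex.exp (Complex.I * (dotZ p m : ℝ))

/-- `C` is the bounded self-adjoint realization
`C_V = Σ_x i V(x) (|δ_x⟩⟨g_x| - |g_x⟩⟨δ_x|)` of the commutator `i[V, A(𝔢)]`. -/
def IsCommOp {d : ℕ} (V : Γd d → ℝ) (g : Γd d → L2 d) (C : L2 d →L[ℂ] L2 d) : Prop :=
  ∀ ψ : L2 d,
    HasSum (fun x : Γd d =>
      (Complex.I * (V x : ℂ)) • (⟪g x, ψ⟫ • delta x - ⟪delta x, ψ⟫ • g x)) (C ψ)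

/-- `R` is the resolvent `(z - H)^{-1}`. -/
def IsResolventAt {d : ℕ} (H : L2 d →L[ℂ] L2 d) (z : ℂ) (R : L2 d →L[ℂ] L2 d) : Prop :=
  R.comp (z • (1 : L2 d →L[ℂ] L2 d) - H) = 1 ∧ (z • (1 : L2 d →L[ℂ] L2 d) - H).comp R = 1

/-- `‖f‖_{C^m} ≤ C`: all partial derivatives of order `≤ m` are bounded by `C`. -/
def CmNormLe {d : ℕ} (m : ℕ) (f : (Fin d → ℝ) → ℝ) (C : ℝ) : Prop :=
  ∀ j : ℕ, j ≤ m → ∀ (p : Fin d → ℝ) (k : Fin j → Fin d),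
    |iteratedFDeriv ℝ j f p (fun i => Pi.single (k i) 1)| ≤ C

/-- `K(𝔢) ≥ K`: at every critical point, every eigenvalue `λ` of the Hessian
satisfies `|λ|^{1/2} ≥ K`. -/
def MinCurvGe {d : ℕ} (f : (Fin d → ℝ) → ℝ) (K : ℝ) : Prop :=
  ∀ p, fderiv ℝ f p = 0 → ∀ (lam : ℝ) (v : Fin d → ℝ), v ≠ 0 →
    (hess f p).mulVec v = lam • v → K ^ 2 ≤ |lam|

/-- The set of thresholds `Thr(𝔢) = 𝔢(Crit(𝔢))`. -/
def Thr {d : ℕ} (f : (Fin d → ℝ) → ℝ) : Set ℝ := f '' {p | fderiv ℝ f p = 0}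


/-- The number of strictly negative eigenvalues of `C`, counted with multiplicity:
the dimension of the span of eigenvectors with strictly negative eigenvalue. -/
def NegCount {d : ℕ} (C : L2 d →L[ℂ] L2 d) : Cardinal :=
  Module.rank ℂ (Submodule.span ℂ
    {ψ : L2 d | ψ ≠ 0 ∧ ∃ μ : ℝ, μ < 0 ∧ C ψ = (μ : ℂ) • ψ})

/-- The number of strictly positive eigenvalues of `C`, counted with multiplicity. -/
def PosCount {d : ℕ} (C : L2 d →L[ℂ] L2 d) : Cardinal :=
  Module.rank ℂ (Submodule.span ℂ
    {ψ : L2 d | ψ ≠ 0 ∧ ∃ μ : ℝ, 0 < μ ∧ C ψ = (μ : ℂ) • ψ})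



/-- Polar coordinates bound: a bound on all radial integrals bounds the integral. -/
theorem polar_bound {E : Type*} [NormedAddCommGroup E] [NormedSpace ℝ E] [MeasurableSpace E]
    [BorelSpace E] [FiniteDimensional ℝ E] [Nontrivial E] (μ : Measure E) [μ.IsAddHaarMeasure]
    (G : E → ℂ) (hG : Integrable G μ) (B : ℝ)
    (hB : ∀ w : E, ‖w‖ = 1 →
      ‖∫ y in Set.Ioi (0 : ℝ), y ^ (Module.finrank ℝ E - 1) • G (y • w)‖ ≤ B) :
    ‖∫ x, G x ∂μ‖ ≤ B * μ.toSphere.real Set.univ := by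
  have h1 : ∫ x, G x ∂μ = ∫ x : ({(0)}ᶜ : Set E), G x.1 ∂(μ.comap (↑)) := by
    rw [integral_subtype_comap (measurableSet_singleton _).compl G,
        restrict_compl_singleton]
  have h2 : ∫ x : ({(0)}ᶜ : Set E), G x.1 ∂(μ.comap (↑)) =
      ∫ p, G (p.2.1 • p.1.1) ∂μ.toSphere.prod (.volumeIoiPow (Module.finrank ℝ E - 1)) := by
    have := μ.measurePreserving_homeomorphUnitSphereProd.integral_comp
        (Homeomorph.measurableEmbedding _)
        (fun p : Metric.sphere (0 : E) 1 × Set.Ioi (0 : ℝ) => G (p.2.1 • p.1.1))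
    rw [← this]
    congr 1
    ext x
    have hx : ‖(x : E)‖ ≠ 0 := norm_ne_zero_iff.2 x.2
    simp [smul_smul, hx]
  have hint : Integrable (fun p : Metric.sphere (0 : E) 1 × Set.Ioi (0 : ℝ) => G (p.2.1 • p.1.1))
      (μ.toSphere.prod (.volumeIoiPow (Module.finrank ℝ E - 1))) := by
    rw [← μ.measurePreserving_homeomorphUnitSphereProd.integrable_comp_emb
        (Homeomorph.measurableEmbedding _)]
    have h3 : Integrable (fun x : ({(0)}ᶜ : Set E) => G x.1) (μ.comap (↑)) := by
      have := (integrableOn_iff_comap_subtypeVal (μ := μ) (f := G)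
        (measurableSet_singleton (0 : E)).compl).1 hG.integrableOn
      exact this
    convert h3 using 1
    ext x
    have hx : ‖(x : E)‖ ≠ 0 := norm_ne_zero_iff.2 x.2
    simp [smul_smul, hx]
  rw [h1, h2, integral_prod _ hint]
  refine norm_integral_le_of_norm_le_const (Filter.Eventually.of_forall fun w => ?_)
  have := hB w.1 (by simp)
  refine le_trans (le_of_eq (congrArg norm ?_)) this
  simp only [Measure.volumeIoiPow, ENNReal.ofReal]
  rw [integral_withDensity_eq_integral_smul,
    integral_subtype_comap measurableSet_Ioi
      fun a ↦ Real.toNNReal (a ^ (Module.finrank ℝ E - 1)) • G (a • w.1),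
    setIntegral_congr_fun measurableSet_Ioi fun x hx ↦ ?_]
  · rw [NNReal.smul_def, Real.coe_toNNReal _ (pow_nonneg hx.out.le _)]
  · exact (measurable_subtype_coe.pow_const _).real_toNNReal

/-- The constant in the logarithmic estimate. -/
def logConst : ℝ := ∫ u in (-1 : ℝ)..1, |Real.log u|

theorem logConst_nonneg : 0 ≤ logConst :=
  intervalIntegral.integral_nonneg (by norm_num) fun _ _ => abs_nonneg _

theorem log_pointwise (w : ℂ) : ∃ k ∈ Set.Icc (0 : ℝ) 1, ∀ t ∈ Set.Ioo (0 : ℝ) 1, t ≠ k →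
    |Real.log ‖w - ((t ^ 2 : ℝ) : ℂ)‖| ≤ ‖w‖ + 1 + |Real.log (t - k)| + |Real.log t| := by
  obtain ⟨k, hk, hk2⟩ : ∃ k ∈ Set.Icc (0 : ℝ) 1, ∀ t ∈ Set.Ioo (0 : ℝ) 1,
      |t - k| * t ≤ |w.re - t ^ 2| := by
    rcases le_total w.re 0 with h | h
    · refine ⟨0, by simp, fun t ht => ?_⟩
      rw [sub_zero, abs_of_pos ht.1]
      refine le_trans ?_ (neg_le_abs _)
      nlinarith
    rcases le_total w.re 1 with h' | h'
    · refine ⟨√w.re, ⟨Real.sqrt_nonneg _, Real.sqrt_le_one.2 h'⟩, fun t ht => ?_⟩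
      have hs := Real.sq_sqrt h
      have hs0 := Real.sqrt_nonneg w.re
      have : w.re - t ^ 2 = -((t - √w.re) * (t + √w.re)) := by linear_combination -hs
      rw [this, abs_neg, abs_mul]
      refine mul_le_mul_of_nonneg_left ?_ (abs_nonneg _)
      refine le_trans ?_ (le_abs_self _)
      linarith
    · refine ⟨1, by simp, fun t ht => ?_⟩
      refine le_trans ?_ (le_abs_self _)
      have h1 := ht.1
      have h2 := ht.2
      rw [abs_sub_comm, abs_of_pos (by linarith)]
      nlinarith
  refine ⟨k, hk, fun t ht htk => ?_⟩
  set v : ℂ := w - ((t ^ 2 : ℝ) : ℂ) with hv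
  have hre : |w.re - t ^ 2| ≤ ‖v‖ := by
    have := Complex.abs_re_le_norm v
    simpa [hv, -Complex.ofReal_pow] using this
  have htk' : 0 < |t - k| := abs_pos.2 (sub_ne_zero.2 htk)
  have hpos : 0 < |t - k| * t := mul_pos htk' ht.1
  have hle : |t - k| * t ≤ ‖v‖ := (hk2 t ht).trans hre
  have hvpos : 0 < ‖v‖ := hpos.trans_le hle
  have hvle : ‖v‖ ≤ ‖w‖ + 1 := by
    refine (norm_sub_le _ _).trans ?_
    rw [Complex.norm_real, Real.norm_eq_abs, abs_of_nonneg (sq_nonneg t)]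
    nlinarith [ht.1, ht.2]
  have hl1 := Real.log_le_sub_one_of_pos hvpos
  have hl2 := Real.log_le_log hpos hle
  rw [Real.log_mul htk'.ne' ht.1.ne', Real.log_abs] at hl2
  have := neg_abs_le (Real.log (t - k))
  have := neg_abs_le (Real.log t)
  have := abs_nonneg (Real.log (t - k))
  have := abs_nonneg (Real.log t)
  have := norm_nonneg w
  rw [abs_le]
  constructor <;> linarith

theorem log_integral_bound (w : ℂ) (hw : w.im ≠ 0) :
    ∫ t in (0 : ℝ)..1, |Real.log ‖w - ((t ^ 2 : ℝ) : ℂ)‖| ≤ ‖w‖ + 1 + 2 * logConst := by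
  obtain ⟨k, hk, hkt⟩ := log_pointwise w
  have hi0 : IntervalIntegrable (fun u => |Real.log u|) volume (-1) 1 :=
    intervalIntegral.intervalIntegrable_log'.abs
  have hi1 : IntervalIntegrable (fun t => |Real.log t|) volume 0 1 :=
    intervalIntegral.intervalIntegrable_log'.abs
  have hi2 : IntervalIntegrable (fun t => |Real.log (t - k)|) volume 0 1 := by
    have : IntervalIntegrable (fun u => |Real.log u|) volume (0 - k) (1 - k) :=
      intervalIntegral.intervalIntegrable_log'.abs
    simpa using this.comp_sub_right k
  have hc : Continuous fun t : ℝ => |Real.log ‖w - ((t ^ 2 : ℝ) : ℂ)‖| := by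
    refine (Continuous.log (by fun_prop) fun t => ?_).abs
    intro h
    apply hw
    have := congrArg Complex.im (norm_eq_zero.1 h)
    simpa [-Complex.ofReal_pow] using this
  have hle : ∫ t in (0 : ℝ)..1, |Real.log ‖w - ((t ^ 2 : ℝ) : ℂ)‖| ≤
      ∫ t in (0 : ℝ)..1, (‖w‖ + 1 + |Real.log (t - k)| + |Real.log t|) := by
    refine intervalIntegral.integral_mono_ae_restrict zero_le_one (hc.intervalIntegrable _ _)
      ((intervalIntegrable_const.add hi2).add hi1) ?_
    have hne : ∀ c : ℝ, ∀ᵐ t ∂(volume.restrict (Set.Icc (0 : ℝ) 1)), t ≠ c := fun c =>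
      ae_restrict_of_ae (Measure.ae_ne volume c)
    filter_upwards [hne 0, hne 1, hne k, ae_restrict_mem measurableSet_Icc] with t h0 h1 h2 h3
    exact hkt t ⟨lt_of_le_of_ne h3.1 (Ne.symm h0), lt_of_le_of_ne h3.2 h1⟩ h2
  refine hle.trans ?_
  rw [intervalIntegral.integral_add (intervalIntegrable_const.add hi2) hi1,
    intervalIntegral.integral_add intervalIntegrable_const hi2]
  have e1 : ∫ t in (0 : ℝ)..1, |Real.log t| ≤ logConst :=
    intervalIntegral.integral_mono_interval (by norm_num) (by norm_num) le_rfl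
      (Filter.Eventually.of_forall fun _ => abs_nonneg _) hi0
  have e2 : ∫ t in (0 : ℝ)..1, |Real.log (t - k)| ≤ logConst := by
    rw [intervalIntegral.integral_comp_sub_right (fun u => |Real.log u|) k]
    exact intervalIntegral.integral_mono_interval (by linarith [hk.2]) (by linarith)
      (by linarith [hk.1]) (Filter.Eventually.of_forall fun _ => abs_nonneg _) hi0
  simp only [intervalIntegral.integral_const, sub_zero, smul_eq_mul, one_mul]
  linarith

theorem norm_clog_le (w : ℂ) : ‖Complex.log w‖ ≤ |Real.log ‖w‖| + π := by
  refine (Complex.norm_le_abs_re_add_abs_im _).trans ?_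
  rw [Complex.log_re, Complex.log_im]
  gcongr
  exact Complex.abs_arg_le_pi w

/-- The radial integration by parts. -/
theorem radial_bound (k : ℕ) (g g' : ℝ → ℝ) (M D : ℝ) (hM : 0 ≤ M)
    (hg : ∀ t, HasDerivAt g (g' t) t) (hg'c : Continuous g') (h1 : g 1 = 0)
    (hgM : ∀ t, |g t| ≤ M) (hgD : ∀ t, |g' t| ≤ D) (w : ℂ) (hw : w.im ≠ 0) :
    ‖∫ t in (0 : ℝ)..1, ((t ^ (k + 1) : ℝ) : ℂ) * ((g t : ℂ) / (w - ((t ^ 2 : ℝ) : ℂ)))‖ ≤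
      M * (|Real.log ‖w‖| + π) + (k * M + D) * (‖w‖ + 1 + 2 * logConst + π) := by
  have hD : 0 ≤ D := (abs_nonneg _).trans (hgD 0)
  have him : ∀ t : ℝ, (w - ((t ^ 2 : ℝ) : ℂ)).im ≠ 0 := fun t => by
    simpa [-Complex.ofReal_pow] using hw
  have hne : ∀ t : ℝ, w - ((t ^ 2 : ℝ) : ℂ) ≠ 0 := fun t h => him t (by rw [h]; rfl)
  have hslit : ∀ t : ℝ, w - ((t ^ 2 : ℝ) : ℂ) ∈ Complex.slitPlane := fun t => Or.inr (him t)
  have hgc : Continuous g := continuous_iff_continuousAt.2 fun t => (hg t).continuousAt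
  set u : ℝ → ℂ := fun t => ((t ^ k * g t : ℝ) : ℂ) with hu
  set u' : ℝ → ℂ := fun t => (((k : ℝ) * t ^ (k - 1) * g t + t ^ k * g' t : ℝ) : ℂ) with hu'
  set v : ℝ → ℂ := fun t => -(1 / 2) * Complex.log (w - ((t ^ 2 : ℝ) : ℂ)) with hv
  set v' : ℝ → ℂ := fun t => ((t : ℝ) : ℂ) / (w - ((t ^ 2 : ℝ) : ℂ)) with hv'
  have hud : ∀ t, HasDerivAt u (u' t) t := fun t =>
    ((hasDerivAt_pow k t).mul (hg t)).ofReal_comp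
  have hvd : ∀ t, HasDerivAt v (v' t) t := fun t => by
    have h2 : HasDerivAt (fun t : ℝ => w - ((t ^ 2 : ℝ) : ℂ)) (-((2 * t : ℝ) : ℂ)) t := by
      have := ((hasDerivAt_pow 2 t).ofReal_comp).const_sub w
      simpa using this
    have := (h2.clog_real (hslit t)).const_mul (-(1 / 2) : ℂ)
    refine this.congr_deriv ?_
    simp only [hv']
    push_cast
    ring
  have hu'c : Continuous u' := by
    simp only [hu']
    fun_prop
  have hv'c : Continuous v' := by
    simp only [hv']
    exact Continuous.div (by fun_prop) (by fun_prop) hne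
  have hvc : Continuous v := continuous_iff_continuousAt.2 fun t => (hvd t).continuousAt
  have key := intervalIntegral.integral_mul_deriv_eq_deriv_mul (a := 0) (b := 1)
    (fun t _ => hud t) (fun t _ => hvd t) (hu'c.intervalIntegrable _ _) (hv'c.intervalIntegrable _ _)
  have e : ∫ t in (0 : ℝ)..1, ((t ^ (k + 1) : ℝ) : ℂ) * ((g t : ℂ) / (w - ((t ^ 2 : ℝ) : ℂ))) =
      ∫ t in (0 : ℝ)..1, u t * v' t := by
    congr 1
    ext t
    simp only [hu, hv']
    push_cast
    ring
  have hu1 : u 1 = 0 := by simp [hu, h1]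
  rw [e, key, hu1, zero_mul, zero_sub]
  have hvb : ∀ t, ‖v t‖ ≤ |Real.log ‖w - ((t ^ 2 : ℝ) : ℂ)‖| + π := fun t => by
    have h3 := norm_clog_le (w - ((t ^ 2 : ℝ) : ℂ))
    have : ‖v t‖ = 1 / 2 * ‖Complex.log (w - ((t ^ 2 : ℝ) : ℂ))‖ := by
      simp [hv]
    rw [this]
    linarith [norm_nonneg (Complex.log (w - ((t ^ 2 : ℝ) : ℂ)))]
  have b1 : ‖u 0 * v 0‖ ≤ M * (|Real.log ‖w‖| + π) := by
    rw [norm_mul]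
    have := hvb 0
    simp only [ne_eq, OfNat.ofNat_ne_zero, not_false_eq_true, zero_pow, Complex.ofReal_zero,
      sub_zero] at this
    refine mul_le_mul ?_ this (norm_nonneg _) hM
    simp only [hu, Complex.norm_real, Real.norm_eq_abs, abs_mul, abs_pow, abs_zero]
    have h5 : (0 : ℝ) ^ k ≤ 1 := pow_le_one₀ le_rfl zero_le_one
    have h6 : (0 : ℝ) ≤ 0 ^ k := by positivity
    nlinarith [hgM 0, abs_nonneg (g 0)]
  have b2 : ‖∫ t in (0 : ℝ)..1, u' t * v t‖ ≤
      (k * M + D) * (‖w‖ + 1 + 2 * logConst + π) := by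
    have hlc : Continuous fun t : ℝ => |Real.log ‖w - ((t ^ 2 : ℝ) : ℂ)‖| :=
      (Continuous.log (by fun_prop) fun t => norm_ne_zero_iff.2 (hne t)).abs
    calc ‖∫ t in (0 : ℝ)..1, u' t * v t‖
        ≤ ∫ t in (0 : ℝ)..1, (k * M + D) * (|Real.log ‖w - ((t ^ 2 : ℝ) : ℂ)‖| + π) := by
          refine intervalIntegral.norm_integral_le_of_norm_le zero_le_one
            (Filter.Eventually.of_forall fun t ht => ?_)
            ((continuous_const.mul (hlc.add continuous_const)).intervalIntegrable _ _)
          rw [norm_mul]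
          refine mul_le_mul ?_ (hvb t) (norm_nonneg _) (by positivity)
          simp only [hu', Complex.norm_real, Real.norm_eq_abs]
          refine (abs_add_le _ _).trans ?_
          have p1 : ∀ j : ℕ, |t ^ j| ≤ 1 := fun j => by
            rw [abs_pow, abs_of_pos ht.1]
            exact pow_le_one₀ ht.1.le ht.2
          rw [abs_mul, abs_mul, abs_mul, Nat.abs_cast]
          have q1 : (k : ℝ) * |t ^ (k - 1)| * |g t| ≤ k * 1 * M := by
            gcongr
            · exact p1 _
            · exact hgM t
          have q2 : |t ^ k| * |g' t| ≤ 1 * D := by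
            gcongr
            · exact p1 _
            · exact hgD t
          linarith
      _ ≤ _ := by
          rw [intervalIntegral.integral_const_mul]
          refine mul_le_mul_of_nonneg_left ?_ (by positivity)
          rw [intervalIntegral.integral_add (hlc.intervalIntegrable _ _) intervalIntegrable_const]
          simp only [intervalIntegral.integral_const, sub_zero, smul_eq_mul, one_mul]
          linarith [log_integral_bound w hw]
  calc _ ≤ ‖-(u 0 * v 0)‖ + ‖∫ t in (0 : ℝ)..1, u' t * v t‖ := norm_sub_le _ _
    _ ≤ _ := by rw [norm_neg]; exact add_le_add b1 b2

theorem hyperbolic_main (n m : ℕ) (hn : 2 ≤ n) (hm : 1 ≤ m) (r : ℝ) (hr1 : r < 1) :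
    ∃ c : ℝ, ∀ (f : EuclideanSpace ℝ (Fin n) × EuclideanSpace ℝ (Fin m) → ℝ)
        (M : ℝ) (a b : ℝ), b ≠ 0 → ContDiff ℝ 1 f →
      tsupport f ⊆
        Metric.ball (0 : EuclideanSpace ℝ (Fin n)) r ×ˢ
          Metric.ball (0 : EuclideanSpace ℝ (Fin m)) r →
      (∀ q, |f q| ≤ M) →
      (∀ (q : EuclideanSpace ℝ (Fin n) × EuclideanSpace ℝ (Fin m)) (i : Fin n),
        |fderiv ℝ f q (EuclideanSpace.single i 1, 0)| ≤ M) →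
      ‖∫ q : EuclideanSpace ℝ (Fin n) × EuclideanSpace ℝ (Fin m), (f q : ℂ) /
            ((a : ℂ) + Complex.I * (b : ℂ) - ((‖q.1‖ ^ 2 : ℝ) : ℂ) + ((‖q.2‖ ^ 2 : ℝ) : ℂ))‖ ≤
        c * M * (1 + a ^ 2 + b ^ 2) := by
  obtain ⟨k, rfl⟩ : ∃ k, n = k + 2 := ⟨n - 2, by omega⟩
  obtain ⟨l, rfl⟩ : ∃ l, m = l + 1 := ⟨m - 1, by omega⟩
  set X := EuclideanSpace ℝ (Fin (k + 2)) with hX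
  set Y := EuclideanSpace ℝ (Fin (l + 1)) with hY
  set S : ℝ := (volume : Measure X).toSphere.real Set.univ with hS
  set V : ℝ := (volume : Measure Y).real (Metric.ball 0 1) with hV
  have hS0 : 0 ≤ S := measureReal_nonneg
  have hV0 : 0 ≤ V := measureReal_nonneg
  have hL0 := logConst_nonneg
  have hpi := Real.pi_pos
  refine ⟨((l + 1 : ℕ) : ℝ) * V * S * (2 + 2 * logConst + π + (k + (k + 2)) * (3 + 2 * logConst + π)), ?_⟩
  intro f M a b hb hf hsupp hfM hfx
  have hM : 0 ≤ M := (abs_nonneg _).trans (hfM 0)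
  have hf0 : ∀ q : X × Y, (1 ≤ ‖q.1‖ ∨ 1 ≤ ‖q.2‖) → f q = 0 := by
    intro q hq
    by_contra h
    have := hsupp (subset_tsupport f h)
    simp only [Set.mem_prod, mem_ball_zero_iff] at this
    rcases hq with hq | hq <;> linarith [this.1, this.2]
  set z : ℂ := (a : ℂ) + Complex.I * (b : ℂ) with hz
  have hzim : z.im = b := by simp [hz]
  have hzn : ‖z‖ ≤ |a| + |b| := by
    refine (norm_add_le _ _).trans ?_
    simp
  have hden : ∀ s t : ℝ, z - (s : ℂ) + (t : ℂ) ≠ 0 := by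
    intro s t h
    have := congrArg Complex.im h
    simp [hzim] at this
    exact hb this
  set F : X × Y → ℂ := fun q => (f q : ℂ) /
      (z - ((‖q.1‖ ^ 2 : ℝ) : ℂ) + ((‖q.2‖ ^ 2 : ℝ) : ℂ)) with hF
  have hfc : Continuous f := hf.continuous
  have hFc : Continuous F := by
    refine Continuous.div (by fun_prop) (by fun_prop) fun q => hden _ _
  have hfcs : HasCompactSupport f := by
    refine HasCompactSupport.intro (K := Metric.closedBall (0 : X) 1 ×ˢ Metric.closedBall (0 : Y) 1)
      ((isCompact_closedBall _ _).prod (isCompact_closedBall _ _)) fun q hq => hf0 q ?_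
    by_contra! h
    exact hq ⟨by simpa using h.1.le, by simpa using h.2.le⟩
  have hFcs : HasCompactSupport F := by
    refine HasCompactSupport.intro hfcs fun q hq => ?_
    simp [hF, image_eq_zero_of_notMem_tsupport hq]
  have hFi : Integrable F := hFc.integrable_of_hasCompactSupport hFcs
  -- bound for the inner integral
  have hJ : ∀ y : Y, ‖y‖ < 1 → ‖∫ x : X, F (x, y)‖ ≤
      (M * (|Real.log ‖z + ((‖y‖ ^ 2 : ℝ) : ℂ)‖| + π) +
        (k * M + (k + 2) * M) * (‖z‖ + 2 + 2 * logConst + π)) * S := by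
    intro y hy
    have hint : Integrable (fun x : X => F (x, y)) := by
      refine Continuous.integrable_of_hasCompactSupport (by fun_prop) ?_
      refine HasCompactSupport.intro (isCompact_closedBall (0 : X) 1) fun x hx => ?_
      have : f (x, y) = 0 := hf0 _ (Or.inl (by simpa using (not_le.1 (by simpa using hx)).le))
      simp [hF, this]
    refine polar_bound volume _ hint _ fun w hw => ?_
    have hfd : ∀ t : ℝ, HasDerivAt (fun t : ℝ => f (t • w, y)) (fderiv ℝ f (t • w, y) (w, 0)) t := by
      intro t
      have h1 : HasFDerivAt f (fderiv ℝ f (t • w, y)) (t • w, y) :=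
        (hf.differentiable one_ne_zero _).hasFDerivAt
      have h2 : HasDerivAt (fun t : ℝ => (t • w, y)) (w, (0 : Y)) t := by
        have := (hasDerivAt_id t).smul_const w
        simp only [one_smul] at this
        exact this.prodMk (hasDerivAt_const t y)
      exact h1.comp_hasDerivAt t h2
    have hfdc : Continuous fun t : ℝ => fderiv ℝ f (t • w, y) (w, 0) := by
      have := hf.continuous_fderiv one_ne_zero
      fun_prop
    have hfdb : ∀ t : ℝ, |fderiv ℝ f (t • w, y) (w, 0)| ≤ (k + 2) * M := by
      intro t
      have hdec : ((w, 0) : X × Y) = ∑ i, (w i) • ((EuclideanSpace.single i (1 : ℝ), 0) : X × Y) := by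
        apply Prod.ext
        · rw [Prod.fst_sum]
          have := (EuclideanSpace.basisFun (Fin (k + 2)) ℝ).sum_repr w
          simp only [EuclideanSpace.basisFun_repr, EuclideanSpace.basisFun_apply] at this
          exact this.symm
        · rw [Prod.snd_sum]
          simp
      rw [hdec, map_sum]
      refine (Finset.abs_sum_le_sum_abs _ _).trans ?_
      have : ∀ i ∈ (Finset.univ : Finset (Fin (k + 2))),
          |fderiv ℝ f (t • w, y) (w i • ((EuclideanSpace.single i (1 : ℝ), 0) : X × Y))| ≤ M := by
        intro i _
        rw [map_smul, smul_eq_mul, abs_mul]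
        have h1 : |w i| ≤ 1 := by
          have := PiLp.norm_apply_le w i
          rw [hw] at this
          simpa using this
        have h2 := hfx (t • w, y) i
        calc _ ≤ 1 * M := mul_le_mul h1 h2 (abs_nonneg _) zero_le_one
          _ = M := one_mul M
      refine (Finset.sum_le_card_nsmul _ _ _ this).trans ?_
      simp
    have hwim : (z + ((‖y‖ ^ 2 : ℝ) : ℂ)).im ≠ 0 := by
      rw [Complex.add_im, Complex.ofReal_im, hzim, add_zero]
      exact hb
    have hrad := radial_bound k (fun t => f (t • w, y)) (fun t => fderiv ℝ f (t • w, y) (w, 0))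
      M ((k + 2) * M) hM hfd hfdc (hf0 _ (Or.inl (by simp [hw]))) (fun t => hfM _) hfdb
      (z + ((‖y‖ ^ 2 : ℝ) : ℂ)) hwim
    have hzy : ‖z + ((‖y‖ ^ 2 : ℝ) : ℂ)‖ ≤ ‖z‖ + 1 := by
      refine (norm_add_le _ _).trans ?_
      rw [Complex.norm_real, Real.norm_eq_abs, abs_of_nonneg (sq_nonneg _)]
      nlinarith [norm_nonneg y]
    have heq : ∫ t in Set.Ioi (0 : ℝ), t ^ (Module.finrank ℝ X - 1) • F (t • w, y) =
        ∫ t in (0 : ℝ)..1, ((t ^ (k + 1) : ℝ) : ℂ) *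
          ((f (t • w, y) : ℂ) / ((z + ((‖y‖ ^ 2 : ℝ) : ℂ)) - ((t ^ 2 : ℝ) : ℂ))) := by
      rw [intervalIntegral.integral_of_le zero_le_one]
      have hfr : Module.finrank ℝ X - 1 = k + 1 := by
        have h0 : Module.finrank ℝ X = k + 2 := finrank_euclideanSpace_fin
        omega
      rw [hfr]
      have hsub : Set.Ioc (0 : ℝ) 1 ⊆ Set.Ioi 0 := Set.Ioc_subset_Ioi_self
      rw [setIntegral_eq_of_subset_of_forall_sdiff_eq_zero measurableSet_Ioi hsub]
      · refine setIntegral_congr_fun measurableSet_Ioc fun t ht => ?_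
        simp only [hF, norm_smul, hw, mul_one, Real.norm_eq_abs, sq_abs, Complex.real_smul]
        congr 2
        ring
      · intro t ht
        have ht1 : 1 ≤ t := by
          by_contra! h
          exact ht.2 ⟨ht.1, h.le⟩
        have : f (t • w, y) = 0 := hf0 _ (Or.inl (by
          simp only [norm_smul, hw, mul_one, Real.norm_eq_abs]
          exact ht1.trans (le_abs_self t)))
        simp [hF, this]
    rw [heq]
    refine hrad.trans ?_
    refine add_le_add le_rfl ?_
    refine mul_le_mul_of_nonneg_left ?_ (by positivity)
    linarith
  set A : ℝ := π + (k + (k + 2)) * (‖z‖ + 2 + 2 * logConst + π) with hA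
  have hA0 : 0 ≤ A := by positivity
  set H : ℝ → ℝ := Set.indicator (Set.Iio 1)
    (fun t => S * M * (|Real.log ‖z + ((t ^ 2 : ℝ) : ℂ)‖| + A)) with hH
  have hlogc : Continuous fun t : ℝ => |Real.log ‖z + ((t ^ 2 : ℝ) : ℂ)‖| := by
    refine (Continuous.log (by fun_prop) fun t => norm_ne_zero_iff.2 ?_).abs
    have := hden 0 (t ^ 2)
    simpa using this
  have hHi : Integrable (fun y : Y => H ‖y‖) := by
    have h1 : (fun y : Y => H ‖y‖) = Set.indicator (Metric.ball (0 : Y) 1)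
        (fun y => S * M * (|Real.log ‖z + ((‖y‖ ^ 2 : ℝ) : ℂ)‖| + A)) := by
      ext y
      simp [hH, Set.indicator]
    rw [h1, integrable_indicator_iff measurableSet_ball]
    refine IntegrableOn.mono_set ?_ (Metric.ball_subset_closedBall (x := (0 : Y)) (ε := 1))
    refine ContinuousOn.integrableOn_compact (isCompact_closedBall _ _) ?_
    exact (continuous_const.mul
      ((hlogc.comp continuous_norm).add continuous_const)).continuousOn
  have hHint : ∫ y : Y, H ‖y‖ ≤ ((l + 1 : ℕ) : ℝ) * V *
      (S * M * (‖z‖ + 1 + 2 * logConst + A)) := by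
    rw [integral_fun_norm_addHaar volume H]
    have hfr : Module.finrank ℝ Y = l + 1 := finrank_euclideanSpace_fin
    rw [hfr, nsmul_eq_mul, smul_eq_mul, ← mul_assoc]
    refine mul_le_mul_of_nonneg_left ?_ (by positivity)
    have e1 : ∫ t in Set.Ioi (0 : ℝ), t ^ (l + 1 - 1) • H t =
        ∫ t in Set.Ioo (0 : ℝ) 1, t ^ l * (S * M * (|Real.log ‖z + ((t ^ 2 : ℝ) : ℂ)‖| + A)) := by
      have hsub : Set.Ioo (0 : ℝ) 1 ⊆ Set.Ioi 0 := Set.Ioo_subset_Ioi_self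
      rw [setIntegral_eq_of_subset_of_forall_sdiff_eq_zero measurableSet_Ioi hsub]
      · refine setIntegral_congr_fun measurableSet_Ioo fun t ht => ?_
        simp [hH, Set.indicator, ht.2]
      · intro t ht
        have ht1 : ¬ t < 1 := fun h => ht.2 ⟨ht.1, h⟩
        simp [hH, Set.indicator, ht1]
    rw [e1, ← integral_Ioc_eq_integral_Ioo, ← intervalIntegral.integral_of_le zero_le_one]
    calc ∫ t in (0 : ℝ)..1, t ^ l * (S * M * (|Real.log ‖z + ((t ^ 2 : ℝ) : ℂ)‖| + A))
        ≤ ∫ t in (0 : ℝ)..1, S * M * (|Real.log ‖z + ((t ^ 2 : ℝ) : ℂ)‖| + A) := by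
          refine intervalIntegral.integral_mono_on zero_le_one
            (Continuous.intervalIntegrable (by fun_prop) _ _)
            (Continuous.intervalIntegrable (by fun_prop) _ _) fun t ht => ?_
          refine mul_le_of_le_one_left (by positivity) (pow_le_one₀ ht.1 ht.2)
      _ ≤ _ := by
          rw [intervalIntegral.integral_const_mul,
            intervalIntegral.integral_add (hlogc.intervalIntegrable _ _) intervalIntegrable_const]
          refine mul_le_mul_of_nonneg_left ?_ (by positivity)
          have h1 := log_integral_bound (-z) (by simpa [hzim] using hb)
          have h2 : ∀ t : ℝ, ‖-z - ((t ^ 2 : ℝ) : ℂ)‖ = ‖z + ((t ^ 2 : ℝ) : ℂ)‖ := fun t => by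
            rw [← norm_neg]
            congr 1
            ring
          simp only [h2, norm_neg] at h1
          simp only [intervalIntegral.integral_const, sub_zero, smul_eq_mul, one_mul]
          linarith
  have hmain : ‖∫ q, F q‖ ≤ ∫ y : Y, H ‖y‖ := by
    have e : ∫ q, F q = ∫ y : Y, ∫ x : X, F (x, y) :=
      integral_prod_symm F hFi
    rw [e]
    refine norm_integral_le_of_norm_le hHi (Filter.Eventually.of_forall fun y => ?_)
    by_cases hy : ‖y‖ < 1
    · refine (hJ y hy).trans (le_of_eq ?_)
      simp only [hH, Set.indicator, Set.mem_Iio, hy, if_true, hA]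
      ring
    · have : ∀ x : X, F (x, y) = 0 := fun x => by
        simp [hF, hf0 (x, y) (Or.inr (not_lt.1 hy))]
      simp [this, hH, hy]
  refine (hmain.trans hHint).trans ?_
  set T : ℝ := 1 + a ^ 2 + b ^ 2 with hT
  have hT1 : 1 ≤ T := by nlinarith [sq_nonneg a, sq_nonneg b]
  have hzT : ‖z‖ ≤ T := by
    have : |a| + |b| ≤ T := by
      nlinarith [sq_nonneg (|a| - 1), sq_nonneg (|b| - 1), sq_abs a, sq_abs b]
    linarith
  have hfin : ‖z‖ + 1 + 2 * logConst + A ≤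
      (2 + 2 * logConst + π + (k + (k + 2)) * (3 + 2 * logConst + π)) * T := by
    have h1 : ‖z‖ + 2 + 2 * logConst + π ≤ (3 + 2 * logConst + π) * T := by nlinarith
    have h2 : ((k : ℝ) + (k + 2)) * (‖z‖ + 2 + 2 * logConst + π) ≤
        (k + (k + 2)) * ((3 + 2 * logConst + π) * T) :=
      mul_le_mul_of_nonneg_left h1 (by positivity)
    have h3 : ‖z‖ + 1 + 2 * logConst + π ≤ (2 + 2 * logConst + π) * T := by nlinarith
    rw [hA]
    linarith
  have := mul_le_mul_of_nonneg_left hfin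
    (show 0 ≤ ((l + 1 : ℕ) : ℝ) * V * S * M by positivity)
  linarith

/-- Lemma 3: hyperbolic van Hove singularity.
For `d ≥ 3`, `1 ≤ m ≤ d-1` and `0 < r < 1` there is `C < ∞`, depending only on `d`,
`m` and `r`, such that for every `C¹` function `f` with compact support in
`B_{d-m} × B_m` and `‖f‖_{C¹} ≤ M`, every `a ∈ ℝ` and every `b ≠ 0`:
`|∬ f(x,y)/(a + ib - |x|² + |y|²) dx dy| ≤ C M (1 + a² + b²)`. -/
theorem statement18 (d m : ℕ) (hd : 3 ≤ d) (hm1 : 1 ≤ m) (hm2 : m ≤ d - 1)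
    (r : ℝ) (hr0 : 0 < r) (hr1 : r < 1) :
    ∃ c : ℝ,
      ∀ (f : EuclideanSpace ℝ (Fin (d - m)) × EuclideanSpace ℝ (Fin m) → ℝ)
        (M : ℝ) (a b : ℝ), b ≠ 0 →
      ContDiff ℝ 1 f →
      tsupport f ⊆
        Metric.ball (0 : EuclideanSpace ℝ (Fin (d - m))) r ×ˢ
          Metric.ball (0 : EuclideanSpace ℝ (Fin m)) r →
      (∀ q, |f q| ≤ M) →
      (∀ (q : EuclideanSpace ℝ (Fin (d - m)) × EuclideanSpace ℝ (Fin m)) (i : Fin (d - m)),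
        |fderiv ℝ f q (EuclideanSpace.single i 1, 0)| ≤ M) →
      (∀ (q : EuclideanSpace ℝ (Fin (d - m)) × EuclideanSpace ℝ (Fin m)) (j : Fin m),
        |fderiv ℝ f q (0, EuclideanSpace.single j 1)| ≤ M) →
      ‖∫ q in Metric.ball (0 : EuclideanSpace ℝ (Fin (d - m))) r ×ˢ
            Metric.ball (0 : EuclideanSpace ℝ (Fin m)) r,
          (f q : ℂ) /
            ((a : ℂ) + Complex.I * (b : ℂ) - ((‖q.1‖ ^ 2 : ℝ) : ℂ) + ((‖q.2‖ ^ 2 : ℝ) : ℂ))‖ ≤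
        c * M * (1 + a ^ 2 + b ^ 2) := by
  have hset : ∀ (f : EuclideanSpace ℝ (Fin (d - m)) × EuclideanSpace ℝ (Fin m) → ℝ) (a b : ℝ),
      tsupport f ⊆ Metric.ball (0 : EuclideanSpace ℝ (Fin (d - m))) r ×ˢ
          Metric.ball (0 : EuclideanSpace ℝ (Fin m)) r →
      ∫ q in Metric.ball (0 : EuclideanSpace ℝ (Fin (d - m))) r ×ˢ
            Metric.ball (0 : EuclideanSpace ℝ (Fin m)) r,
          (f q : ℂ) /
            ((a : ℂ) + Complex.I * (b : ℂ) - ((‖q.1‖ ^ 2 : ℝ) : ℂ) + ((‖q.2‖ ^ 2 : ℝ) : ℂ)) =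
      ∫ q, (f q : ℂ) /
            ((a : ℂ) + Complex.I * (b : ℂ) - ((‖q.1‖ ^ 2 : ℝ) : ℂ) + ((‖q.2‖ ^ 2 : ℝ) : ℂ)) := by
    intro f a b hs
    refine setIntegral_eq_integral_of_forall_compl_eq_zero fun q hq => ?_
    have : f q = 0 := image_eq_zero_of_notMem_tsupport fun h => hq (hs h)
    simp [this]
  by_cases hcase : 2 ≤ d - m
  · obtain ⟨c, hc⟩ := hyperbolic_main (d - m) m hcase hm1 r hr1
    refine ⟨c, fun f M a b hb hf hs hfM hfx _ => ?_⟩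
    rw [hset f a b hs]
    exact hc f M a b hb hf hs hfM hfx
  · obtain ⟨c, hc⟩ := hyperbolic_main m (d - m) (by omega) (by omega) r hr1
    refine ⟨c, fun f M a b hb hf hs hfM _ hfy => ?_⟩
    rw [hset f a b hs]
    have hfs : ContDiff ℝ 1 (fun p : EuclideanSpace ℝ (Fin m) × EuclideanSpace ℝ (Fin (d - m)) =>
        f p.swap) := hf.comp (contDiff_snd.prodMk contDiff_fst)
    have key := hc (fun p => f p.swap) M (-a) (-b) (neg_ne_zero.2 hb) hfs ?_ (fun q => hfM _) ?_
    · have e : ∫ q : EuclideanSpace ℝ (Fin (d - m)) × EuclideanSpace ℝ (Fin m), (f q : ℂ) /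
            ((a : ℂ) + Complex.I * (b : ℂ) - ((‖q.1‖ ^ 2 : ℝ) : ℂ) + ((‖q.2‖ ^ 2 : ℝ) : ℂ)) =
          -∫ q : EuclideanSpace ℝ (Fin m) × EuclideanSpace ℝ (Fin (d - m)), (f q.swap : ℂ) /
            (((-a : ℝ) : ℂ) + Complex.I * ((-b : ℝ) : ℂ) - ((‖q.1‖ ^ 2 : ℝ) : ℂ) +
              ((‖q.2‖ ^ 2 : ℝ) : ℂ)) := by
        rw [← integral_neg]
        have := integral_prod_swap (μ := (volume : Measure (EuclideanSpace ℝ (Fin (d - m)))))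
          (ν := (volume : Measure (EuclideanSpace ℝ (Fin m))))
          (fun q : EuclideanSpace ℝ (Fin (d - m)) × EuclideanSpace ℝ (Fin m) => (f q : ℂ) /
            ((a : ℂ) + Complex.I * (b : ℂ) - ((‖q.1‖ ^ 2 : ℝ) : ℂ) + ((‖q.2‖ ^ 2 : ℝ) : ℂ)))
        refine Eq.trans this.symm ?_
        refine integral_congr_ae (Filter.Eventually.of_forall fun q => ?_)
        simp only [Prod.fst_swap, Prod.snd_swap]
        rw [← div_neg]
        congr 1
        push_cast
        ring
      rw [e, norm_neg]
      simpa only [neg_sq] using key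
    · intro p hp
      have h1 : p.swap ∈ tsupport f := by
        have := tsupport_comp_subset_preimage f (continuous_swap (X := EuclideanSpace ℝ (Fin m))
          (Y := EuclideanSpace ℝ (Fin (d - m))))
        exact this hp
      have h2 := hs h1
      exact ⟨h2.2, h2.1⟩
    · intro q i
      have h1 : HasFDerivAt f (fderiv ℝ f q.swap) q.swap :=
        (hf.differentiable one_ne_zero _).hasFDerivAt
      have h2 : HasFDerivAt (fun p : EuclideanSpace ℝ (Fin m) × EuclideanSpace ℝ (Fin (d - m)) =>
          p.swap) ((ContinuousLinearMap.snd ℝ _ _).prod (ContinuousLinearMap.fst ℝ _ _)) q :=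
        hasFDerivAt_snd.prodMk hasFDerivAt_fst
      have h3 := (h1.comp q h2).fderiv
      have h4 : fderiv ℝ (fun p : EuclideanSpace ℝ (Fin m) × EuclideanSpace ℝ (Fin (d - m)) =>
          f p.swap) q (EuclideanSpace.single i 1, 0) =
          fderiv ℝ f q.swap (0, EuclideanSpace.single i 1) := by
        refine (congrArg (fun L => L (EuclideanSpace.single i 1, 0)) h3).trans ?_
        simp
      rw [h4]
      exact hfy _ _

end LatSch
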